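/- Let n ∈ ℕ, K > 1, and let μ_1, …, μ_n be probability measures on ℝ^d. Let C_{K,d} = (8/Γ(d/2))·(d/(2e))^{d/2}·(1 + 1/(2K²)), and suppose 0 < α_1 ≤ α_2 ≤ ⋯ ≤ α_n < C_{K,d}^{−1}. Let m = log n / log(3/2) and r > 0. Suppose that for every t ∈ [2^{−m/2} r, K^m α_1^{−m·2^m} r] and every i ∈ {1, …, n} we have s_t(μ_i) ≤ α_i. Then s_r(μ_1 * μ_2 * ⋯ * μ_n) ≤ C_{K,d}^{n−1} · α_1 α_2 ⋯ α_n. -/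

import Mathlib

open MeasureTheory Real

/-- Density of the centered Gaussian on `ℝ^d` with covariance matrix `y • I`. -/
noncomputable def gaussD (d : ℕ) (y : ℝ) (x : EuclideanSpace ℝ (Fin d)) : ℝ :=
  (2 * Real.pi * y) ^ (-(d : ℝ) / 2) * Real.exp (-‖x‖ ^ 2 / (2 * y))

/-- `∂/∂y n_y (x)`. -/
noncomputable def gaussDy (d : ℕ) (y : ℝ) (x : EuclideanSpace ℝ (Fin d)) : ℝ :=
  deriv (fun u => gaussD d u x) y

/-- The detail of a measure `μ` on `ℝ^d` around the scale `r`. -/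
noncomputable def detail (d : ℕ) (μ : Measure (EuclideanSpace ℝ (Fin d))) (r : ℝ) : ℝ :=
  r ^ 2 * (Real.Gamma ((d : ℝ) / 2) / 2) * ((d : ℝ) / (2 * Real.exp 1)) ^ (-(d : ℝ) / 2) *
    ∫ x, |∫ z, gaussDy d (r ^ 2) (x - z) ∂μ|

/-- The constant `C_{K,d} = (8/Γ(d/2)) (d/(2e))^{d/2} (1 + 1/(2K²))`. -/
noncomputable def CKd (K : ℝ) (d : ℕ) : ℝ :=
  8 / Real.Gamma ((d : ℝ) / 2) * ((d : ℝ) / (2 * Real.exp 1)) ^ ((d : ℝ) / 2) *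
    (1 + 1 / (2 * K ^ 2))

/-- The convolution of a finite list of measures (the empty convolution being `δ₀`). -/
noncomputable def convList {d : ℕ} : List (Measure (EuclideanSpace ℝ (Fin d))) →
    Measure (EuclideanSpace ℝ (Fin d))
  | [] => Measure.dirac 0
  | ν :: l => ν ∗ convList l


noncomputable def g1 (d : ℕ) (y : ℝ) (x : EuclideanSpace ℝ (Fin d)) : ℝ :=
  gaussD d y x * ((‖x‖ ^ 2 / (2 * y) - d / 2) / y)

noncomputable def g2 (d : ℕ) (y : ℝ) (x : EuclideanSpace ℝ (Fin d)) : ℝ :=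
  gaussD d y x * (((‖x‖ ^ 2 / (2 * y) - d / 2) ^ 2 - 2 * (‖x‖ ^ 2 / (2 * y)) + d / 2) / y ^ 2)

lemma hasDerivAt_gaussD (d : ℕ) {y : ℝ} (hy : 0 < y) (x : EuclideanSpace ℝ (Fin d)) :
    HasDerivAt (fun u => gaussD d u x) (g1 d y x) y := by
  unfold g1 gaussD
  have h1 : HasDerivAt (fun u : ℝ => 2 * π * u) (2 * π) y := by
    simpa using (hasDerivAt_id y).const_mul (2 * π)
  have h2 := h1.rpow_const (p := -(d : ℝ) / 2) (Or.inl (by positivity))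
  have h3 : HasDerivAt (fun u : ℝ => 2 * u) 2 y := by
    simpa using (hasDerivAt_id y).const_mul (2 : ℝ)
  have h4 := ((hasDerivAt_const y (-‖x‖ ^ 2)).div h3 (by positivity)).exp
  convert! h2.mul h4 using 1
  rw [Real.rpow_sub_one (by positivity)]
  simp only [Pi.div_apply]
  field_simp
  ring

lemma gaussDy_eq (d : ℕ) {y : ℝ} (hy : 0 < y) (x : EuclideanSpace ℝ (Fin d)) :
    gaussDy d y x = g1 d y x := (hasDerivAt_gaussD d hy x).deriv

lemma hasDerivAt_g1 (d : ℕ) {y : ℝ} (hy : 0 < y) (x : EuclideanSpace ℝ (Fin d)) :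
    HasDerivAt (fun u => g1 d u x) (g2 d y x) y := by
  have h0 := hasDerivAt_gaussD d hy x
  have h3 : HasDerivAt (fun u : ℝ => 2 * u) 2 y := by
    simpa using (hasDerivAt_id y).const_mul (2 : ℝ)
  have h4 := (((hasDerivAt_const y (‖x‖ ^ 2)).div h3 (by positivity)).sub_const ((d:ℝ)/2)).div
    (hasDerivAt_id y) hy.ne'
  convert! h0.mul h4 using 1
  simp only [Pi.div_apply, g1, g2, id]
  field_simp
  ring

lemma gaussD_nonneg (d : ℕ) {y : ℝ} (hy : 0 < y) (x : EuclideanSpace ℝ (Fin d)) :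
    0 ≤ gaussD d y x := by unfold gaussD; positivity

lemma meas_gaussD (d : ℕ) : Measurable (fun p : ℝ × EuclideanSpace ℝ (Fin d) => gaussD d p.1 p.2) := by
  unfold gaussD; fun_prop

lemma meas_g1 (d : ℕ) : Measurable (fun p : ℝ × EuclideanSpace ℝ (Fin d) => g1 d p.1 p.2) := by
  unfold g1; have := meas_gaussD d; fun_prop

lemma meas_g2 (d : ℕ) : Measurable (fun p : ℝ × EuclideanSpace ℝ (Fin d) => g2 d p.1 p.2) := by
  unfold g2; have := meas_gaussD d; fun_prop

lemma cont_gaussD (d : ℕ) (y : ℝ) : Continuous (gaussD d y) := by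
  unfold gaussD; fun_prop

lemma cont_g1 (d : ℕ) (y : ℝ) : Continuous (g1 d y) := by
  unfold g1; have := cont_gaussD d y; fun_prop

lemma cont_g2 (d : ℕ) (y : ℝ) : Continuous (g2 d y) := by
  unfold g2; have := cont_gaussD d y; fun_prop

lemma const_le (d : ℕ) {lo y : ℝ} (hlo : 0 < lo) (hy : lo ≤ y) :
    (2 * π * y) ^ (-(d : ℝ) / 2) ≤ (2 * π * lo) ^ (-(d : ℝ) / 2) := by
  apply Real.rpow_le_rpow_of_nonpos (by positivity) (by gcongr)
  have : (0:ℝ) ≤ d := by positivity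
  linarith

lemma gaussD_le (d : ℕ) {lo y : ℝ} (hlo : 0 < lo) (hy : lo ≤ y) (x : EuclideanSpace ℝ (Fin d)) :
    |gaussD d y x| ≤ (2 * π * lo) ^ (-(d : ℝ) / 2) := by
  have hy0 : 0 < y := by linarith
  rw [abs_of_nonneg (gaussD_nonneg d hy0 x)]
  unfold gaussD
  have h1 := const_le d hlo hy
  have h2 : Real.exp (-‖x‖ ^ 2 / (2 * y)) ≤ 1 := by
    rw [Real.exp_le_one_iff, neg_div]
    have : 0 ≤ ‖x‖ ^ 2 / (2 * y) := by positivity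
    linarith
  calc _ ≤ (2 * π * lo) ^ (-(d : ℝ) / 2) * 1 := by gcongr
    _ = _ := mul_one _

lemma p_exp (p : ℝ) (hp : 0 ≤ p) : p * Real.exp (-p) ≤ 1 ∧ p ^ 2 * Real.exp (-p) ≤ 2 := by
  have h := Real.quadratic_le_exp_of_nonneg hp
  rw [Real.exp_neg]
  have := Real.exp_pos p
  constructor <;> rw [← div_eq_mul_inv, div_le_iff₀ this] <;> nlinarith

lemma g1_le' (d : ℕ) {y : ℝ} (hy : 0 < y) (x : EuclideanSpace ℝ (Fin d)) :
    |g1 d y x| ≤ (2 * π * y) ^ (-(d : ℝ) / 2) * ((2 + d) / y) * Real.exp (-(1/(4*y)) * ‖x‖^2) := by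
  unfold g1 gaussD
  set p := ‖x‖ ^ 2 / (2 * y) with hp
  have hp0 : 0 ≤ p := by positivity
  have e1 : -‖x‖ ^ 2 / (2 * y) = -(p/2) + -(p/2) := by rw [hp]; ring
  have e2 : -(1/(4*y)) * ‖x‖^2 = -(p/2) := by rw [hp]; field_simp; ring
  rw [e1, e2, Real.exp_add, abs_mul, abs_mul, abs_mul, abs_div, abs_of_pos hy, Real.abs_exp,
    abs_of_nonneg (by positivity : (0:ℝ) ≤ (2 * π * y) ^ (-(d : ℝ) / 2))]
  have h1 := (p_exp (p/2) (by positivity)).1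
  have h2 : Real.exp (-(p/2)) ≤ 1 := by rw [Real.exp_le_one_iff]; linarith
  have h3 : |p - d/2| ≤ p + d/2 := by
    rw [abs_le]; constructor <;> have : (0:ℝ) ≤ d := by positivity
    all_goals linarith
  have h4 : Real.exp (-(p/2)) * |p - d/2| ≤ 2 + d := by
    have : (0:ℝ) ≤ d := by positivity
    have := Real.exp_pos (-(p/2))
    nlinarith
  calc _ = (2 * π * y) ^ (-(d : ℝ) / 2) * ((Real.exp (-(p/2)) * |p - d/2|)/y) * Real.exp (-(p/2)) := by ring
    _ ≤ _ := by gcongr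

lemma g1_le (d : ℕ) {lo y : ℝ} (hlo : 0 < lo) (hy : lo ≤ y) (x : EuclideanSpace ℝ (Fin d)) :
    |g1 d y x| ≤ (2 * π * lo) ^ (-(d : ℝ) / 2) * ((2 + d) / lo) := by
  have hy0 : 0 < y := by linarith
  refine (g1_le' d hy0 x).trans ?_
  have h1 := const_le d hlo hy
  have h2 : Real.exp (-(1/(4*y)) * ‖x‖^2) ≤ 1 := by
    rw [Real.exp_le_one_iff, neg_mul]
    have : 0 ≤ (1/(4*y)) * ‖x‖^2 := by positivity
    linarith
  calc _ ≤ (2 * π * lo) ^ (-(d : ℝ) / 2) * ((2 + d) / lo) * 1 := by gcongr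
    _ = _ := mul_one _

lemma g2_le (d : ℕ) {lo y : ℝ} (hlo : 0 < lo) (hy : lo ≤ y) (x : EuclideanSpace ℝ (Fin d)) :
    |g2 d y x| ≤ (2 * π * lo) ^ (-(d : ℝ) / 2) * ((4 + 2 * d + d ^ 2) / lo ^ 2) := by
  have hy0 : 0 < y := by linarith
  have h0 := const_le d hlo hy
  unfold g2 gaussD
  set p := ‖x‖ ^ 2 / (2 * y) with hp
  have hp0 : 0 ≤ p := by positivity
  have e1 : -‖x‖ ^ 2 / (2 * y) = -p := by rw [hp]; ring
  have hd : (0:ℝ) ≤ d := by positivity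
  rw [e1, abs_mul, abs_mul, abs_div, abs_of_nonneg (sq_nonneg y), Real.abs_exp,
    abs_of_nonneg (by positivity : (0:ℝ) ≤ (2 * π * y) ^ (-(d : ℝ) / 2))]
  obtain ⟨h1, h1'⟩ := p_exp p (by positivity)
  have h2 : Real.exp (-p) ≤ 1 := by rw [Real.exp_le_one_iff]; linarith
  have h3 : |(p - d/2)^2 - 2 * p + d/2| ≤ p^2 + d * p + d^2/4 + 2 * p + d/2 := by
    rw [abs_le]; constructor <;> nlinarith [mul_nonneg hd hp0, sq_nonneg (p - d/2)]
  have h4 : Real.exp (-p) * |(p - d/2)^2 - 2 * p + d/2| ≤ 4 + 2 * d + d^2 := by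
    have h5 := Real.exp_pos (-p)
    calc _ ≤ Real.exp (-p) * (p^2 + d * p + d^2/4 + 2 * p + d/2) := by gcongr
      _ = p^2 * Real.exp (-p) + (d+2) * (p * Real.exp (-p)) + (d^2/4+d/2) * Real.exp (-p) := by ring
      _ ≤ 2 + (d + 2) * 1 + (d^2/4+d/2) * 1 := by gcongr
      _ ≤ _ := by nlinarith
  calc _ = (2 * π * y) ^ (-(d : ℝ) / 2) * ((Real.exp (-p) * |(p - d/2)^2 - 2 * p + d/2|)/y^2) := by ring
    _ ≤ _ := by gcongr

lemma int_exp (d : ℕ) {b : ℝ} (hb : 0 < b) :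
    Integrable (fun x : EuclideanSpace ℝ (Fin d) => Real.exp (-b * ‖x‖^2)) := by
  apply Integrable.of_integral_ne_zero
  rw [GaussianFourier.integral_rexp_neg_mul_sq_norm hb]
  positivity

lemma gaussD_eq (d : ℕ) (y : ℝ) : gaussD d y = fun x =>
    (2 * π * y) ^ (-(d : ℝ) / 2) * Real.exp (-(1/(2*y)) * ‖x‖^2) := by
  ext x; unfold gaussD; congr 2; ring

lemma int_gaussD (d : ℕ) {y : ℝ} (hy : 0 < y) : Integrable (gaussD d y) := by
  rw [gaussD_eq]
  exact (int_exp d (by positivity)).const_mul _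

lemma integral_gaussD (d : ℕ) {y : ℝ} (hy : 0 < y) : ∫ x, gaussD d y x = 1 := by
  rw [gaussD_eq, integral_const_mul, GaussianFourier.integral_rexp_neg_mul_sq_norm (by positivity)]
  have : π / (1/(2*y)) = 2 * π * y := by field_simp
  rw [this, finrank_euclideanSpace, Fintype.card_fin, ← Real.rpow_add (by positivity)]
  rw [neg_div, neg_add_cancel, Real.rpow_zero]

lemma int_g1 (d : ℕ) {y : ℝ} (hy : 0 < y) : Integrable (g1 d y) := by
  refine Integrable.mono' ((int_exp d (b := 1/(4*y)) (by positivity)).const_mul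
    ((2 * π * y) ^ (-(d : ℝ) / 2) * ((2 + d) / y))) (cont_g1 d y).aestronglyMeasurable ?_
  exact Filter.Eventually.of_forall fun x => g1_le' d hy x

/-- semigroup -/
lemma conv_gaussD (d : ℕ) {a b : ℝ} (ha : 0 < a) (hb : 0 < b) (x : EuclideanSpace ℝ (Fin d)) :
    ∫ z, gaussD d a (x - z) * gaussD d b z = gaussD d (a + b) x := by
  have key : ∀ z, gaussD d a (x - z) * gaussD d b z
      = gaussD d (a + b) x * gaussD d (a * b / (a + b)) (z - (b / (a + b)) • x) := by
    intro z
    unfold gaussD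
    have hsub : ‖z - (b / (a + b)) • x‖^2
        = ‖z‖^2 - 2 * (b / (a+b)) * inner ℝ x z + (b/(a+b))^2 * ‖x‖^2 := by
      rw [norm_sub_sq_real, inner_smul_right, norm_smul, real_inner_comm, mul_pow]
      simp only [Real.norm_eq_abs, sq_abs]; ring
    have e : -‖x - z‖^2 / (2 * a) + -‖z‖^2 / (2 * b) = -‖x‖^2/(2 * (a + b))
      + - ‖z - (b / (a + b)) • x‖^2 / (2 * (a * b / (a + b))) := by
      rw [hsub, norm_sub_sq_real]
      field_simp
      ring
    have e2 : (2 * π * a) ^ (-(d : ℝ) / 2) * (2 * π * b) ^ (-(d : ℝ) / 2) =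
      (2 * π * (a + b)) ^ (-(d : ℝ) / 2) * (2 * π * (a * b / (a + b))) ^ (-(d : ℝ) / 2) := by
      rw [← Real.mul_rpow (by positivity) (by positivity),
        ← Real.mul_rpow (by positivity) (by positivity)]
      congr 1; field_simp
    calc _ = ((2 * π * a) ^ (-(d : ℝ) / 2) * (2 * π * b) ^ (-(d : ℝ) / 2)) *
        (Real.exp (-‖x - z‖^2 / (2 * a)) * Real.exp (-‖z‖^2 / (2 * b))) := by ring
      _ = _ := by rw [← Real.exp_add, e, e2, Real.exp_add]; ring
  simp_rw [key]
  rw [integral_const_mul, integral_sub_right_eq_self (gaussD d (a * b / (a + b))),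
    integral_gaussD d (by positivity), mul_one]

lemma conv_g1_gaussD (d : ℕ) {a b : ℝ} (ha : 0 < a) (hb : 0 < b) (x : EuclideanSpace ℝ (Fin d)) :
    ∫ z, g1 d a (x - z) * gaussD d b z = g1 d (a + b) x := by
  have hs : Set.Ioi (a/2) ∈ nhds a := Ioi_mem_nhds (by linarith)
  have H := hasDerivAt_integral_of_dominated_loc_of_deriv_le (𝕜 := ℝ) (μ := volume)
    (F := fun u z => gaussD d u (x - z) * gaussD d b z)
    (F' := fun u z => g1 d u (x - z) * gaussD d b z) (x₀ := a) (s := Set.Ioi (a/2))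
    (bound := fun z => (2 * π * (a/2)) ^ (-(d : ℝ) / 2) * ((2 + d) / (a/2)) * gaussD d b z)
    hs ?_ ?_ ?_ ?_ ?_ ?_
  · have h1 : HasDerivAt (fun u => gaussD d (u + b) x) (g1 d (a + b) x) a :=
      (hasDerivAt_gaussD d (by positivity) x).comp_add_const a b
    refine H.2.unique (h1.congr_of_eventuallyEq ?_)
    filter_upwards [hs] with u hu
    exact conv_gaussD d (by simp at hu; linarith) hb x
  · refine Filter.Eventually.of_forall fun u => Continuous.aestronglyMeasurable ?_
    have := cont_gaussD d u
    have := cont_gaussD d b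
    fun_prop
  · refine (int_gaussD d hb).bdd_mul (c := (2 * π * a) ^ (-(d : ℝ) / 2)) ?_ ?_
    · have := cont_gaussD d a
      exact Continuous.aestronglyMeasurable (by fun_prop)
    · exact Filter.Eventually.of_forall fun z => gaussD_le d ha le_rfl _
  · have := cont_g1 d a
    have := cont_gaussD d b
    exact Continuous.aestronglyMeasurable (by fun_prop)
  · refine Filter.Eventually.of_forall fun z u hu => ?_
    rw [norm_mul, Real.norm_eq_abs, Real.norm_of_nonneg (gaussD_nonneg d hb z)]
    have := gaussD_nonneg d hb z
    have := g1_le d (by positivity) (le_of_lt hu) (x - z)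
    gcongr
  · exact (int_gaussD d hb).const_mul _
  · refine Filter.Eventually.of_forall fun z u hu => ?_
    exact (hasDerivAt_gaussD d (by simp at hu; linarith) (x - z)).mul_const _

lemma conv_g1_g1 (d : ℕ) {a b : ℝ} (ha : 0 < a) (hb : 0 < b) (x : EuclideanSpace ℝ (Fin d)) :
    ∫ z, g1 d a (x - z) * g1 d b z = g2 d (a + b) x := by
  have hs : Set.Ioi (b/2) ∈ nhds b := Ioi_mem_nhds (by linarith)
  have hint : Integrable (fun z => g1 d a (x - z)) := (int_g1 d ha).comp_sub_left x
  have hc : Continuous (fun z => g1 d a (x - z)) := by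
    have := cont_g1 d a
    fun_prop
  have H := hasDerivAt_integral_of_dominated_loc_of_deriv_le (𝕜 := ℝ) (μ := volume)
    (F := fun u z => g1 d a (x - z) * gaussD d u z)
    (F' := fun u z => g1 d a (x - z) * g1 d u z) (x₀ := b) (s := Set.Ioi (b/2))
    (bound := fun z => |g1 d a (x - z)| * ((2 * π * (b/2)) ^ (-(d : ℝ) / 2) * ((2 + d) / (b/2))))
    hs ?_ ?_ ?_ ?_ ?_ ?_
  · have h1 : HasDerivAt (fun u => g1 d (a + u) x) (g2 d (a + b) x) b :=
      (hasDerivAt_g1 d (by positivity) x).comp_const_add a b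
    refine H.2.unique (h1.congr_of_eventuallyEq ?_)
    filter_upwards [hs] with u hu
    exact conv_g1_gaussD d ha (by simp at hu; linarith) x
  · refine Filter.Eventually.of_forall fun u => Continuous.aestronglyMeasurable ?_
    have := cont_gaussD d u
    fun_prop
  · refine hint.mul_bdd (c := (2 * π * b) ^ (-(d : ℝ) / 2)) ?_ ?_
    · exact (cont_gaussD d b).aestronglyMeasurable
    · exact Filter.Eventually.of_forall fun z => gaussD_le d hb le_rfl _
  · have := cont_g1 d b
    exact Continuous.aestronglyMeasurable (by fun_prop)
  · refine Filter.Eventually.of_forall fun z u hu => ?_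
    rw [norm_mul, Real.norm_eq_abs, Real.norm_eq_abs]
    have := g1_le d (by positivity) (le_of_lt hu) z
    gcongr
  · exact hint.abs.mul_const _
  · refine Filter.Eventually.of_forall fun z u hu => ?_
    exact (hasDerivAt_gaussD d (by simp at hu; linarith) z).const_mul _

noncomputable def sm {d : ℕ} (μ : Measure (EuclideanSpace ℝ (Fin d))) (A : EuclideanSpace ℝ (Fin d) → ℝ)
    (x : EuclideanSpace ℝ (Fin d)) : ℝ := ∫ z, A (x - z) ∂μ

section
variable {d : ℕ} (μ ν : Measure (EuclideanSpace ℝ (Fin d))) [IsProbabilityMeasure μ]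
  [IsProbabilityMeasure ν] {A B D : EuclideanSpace ℝ (Fin d) → ℝ}

lemma sm_int_prod (hBc : Continuous B) (hBi : Integrable B) :
    Integrable (fun p : EuclideanSpace ℝ (Fin d) × EuclideanSpace ℝ (Fin d) => B (p.2 - p.1))
      (μ.prod volume) := by
  rw [integrable_prod_iff (Continuous.aestronglyMeasurable (by fun_prop))]
  refine ⟨Filter.Eventually.of_forall fun w => hBi.comp_sub_right w, ?_⟩
  have : ∀ w : EuclideanSpace ℝ (Fin d), ∫ z, ‖B (z - w)‖ = ∫ z, ‖B z‖ :=
    fun w => integral_sub_right_eq_self (fun z => ‖B z‖) w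
  simp only [this]
  exact integrable_const _

lemma sm_integrable (hBc : Continuous B) (hBi : Integrable B) : Integrable (sm μ B) :=
  (sm_int_prod μ hBc hBi).integral_prod_right

lemma sm_meas (hBc : Continuous B) : StronglyMeasurable (sm μ B) := by
  have : StronglyMeasurable (fun p : EuclideanSpace ℝ (Fin d) × EuclideanSpace ℝ (Fin d) =>
    B (p.1 - p.2)) := Continuous.stronglyMeasurable (by fun_prop)
  exact this.integral_prod_right

lemma sm_conv (hAc : Continuous A) {M M' : ℝ} (hA : ∀ x, |A x| ≤ M) (hBc : Continuous B) (hBi : Integrable B)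
    (hDc : Continuous D) (hDb : ∀ x, |D x| ≤ M') (hD : ∀ x, ∫ z, A (x - z) * B z = D x)
    (x : EuclideanSpace ℝ (Fin d)) :
    sm (μ ∗ ν) D x = ∫ z, sm μ A (x - z) * sm ν B z := by
  have hDi : Integrable (fun w => D (x - w)) (μ ∗ ν) :=
    Integrable.of_bound (Continuous.aestronglyMeasurable (by fun_prop)) M'
      (Filter.Eventually.of_forall fun w => hDb _)
  have h1 : ∀ w, ∫ v, D (x - (w + v)) ∂ν = ∫ z, A (x - w - z) * sm ν B z := by
    intro w
    have e : ∀ v, D (x - (w + v)) = ∫ z, A (x - w - z) * B (z - v) := by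
      intro v
      rw [← hD, ← integral_sub_right_eq_self _ v]
      congr 1; ext z; congr 2; abel
    simp_rw [e]
    rw [integral_integral_swap]
    · simp_rw [integral_const_mul]; rfl
    · refine (sm_int_prod ν hBc hBi).bdd_mul (c := M) ?_ (Filter.Eventually.of_forall fun p => hA _)
      exact Continuous.aestronglyMeasurable (by fun_prop)
  unfold sm at h1 ⊢
  rw [integral_conv hDi]
  simp_rw [h1]
  rw [integral_integral_swap]
  · congr 1; ext z
    rw [integral_mul_const]
    congr 2; ext w; congr 1; abel
  · refine Integrable.bdd_mul (c := M) ((sm_integrable ν hBc hBi).comp_snd μ) ?_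
      (Filter.Eventually.of_forall fun p => hA _)
    exact Continuous.aestronglyMeasurable (by fun_prop)

lemma sm_conv_norm (hAc : Continuous A) {M M' : ℝ} (hA : ∀ x, |A x| ≤ M) (hBc : Continuous B) (hBi : Integrable B)
    (hDc : Continuous D) (hDb : ∀ x, |D x| ≤ M') (hD : ∀ x, ∫ z, A (x - z) * B z = D x) :
    ∫⁻ x, ‖sm (μ ∗ ν) D x‖ₑ ≤ (∫⁻ x, ‖sm μ A x‖ₑ) * ∫⁻ x, ‖sm ν B x‖ₑ := by
  have hmA : Measurable (sm μ A) := (sm_meas μ hAc).measurable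
  have hmB : Measurable (sm ν B) := (sm_meas ν hBc).measurable
  calc ∫⁻ x, ‖sm (μ ∗ ν) D x‖ₑ ≤ ∫⁻ x, ∫⁻ z, ‖sm μ A (x - z)‖ₑ * ‖sm ν B z‖ₑ := by
        apply lintegral_mono; intro x
        simp only
        rw [sm_conv μ ν hAc hA hBc hBi hDc hDb hD]
        refine (enorm_integral_le_lintegral_enorm _).trans (le_of_eq ?_)
        simp_rw [enorm_mul]
    _ = ∫⁻ z, ∫⁻ x, ‖sm μ A (x - z)‖ₑ * ‖sm ν B z‖ₑ := by
        apply lintegral_lintegral_swap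
        apply Measurable.aemeasurable
        simp only [Function.uncurry_def]
        fun_prop
    _ = ∫⁻ z, (∫⁻ x, ‖sm μ A x‖ₑ) * ‖sm ν B z‖ₑ := by
        congr 1; ext z
        rw [lintegral_mul_const _ (by fun_prop), lintegral_sub_right_eq_self (fun x => ‖sm μ A x‖ₑ)]
    _ = _ := by rw [lintegral_const_mul _ (by fun_prop)]

lemma lnorm_eq (hBc : Continuous B) (hBi : Integrable B) :
    ∫⁻ x, ‖sm μ B x‖ₑ = ENNReal.ofReal (∫ x, |sm μ B x|) := by
  rw [ofReal_integral_eq_lintegral_ofReal (sm_integrable μ hBc hBi).abs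
    (Filter.Eventually.of_forall fun x => abs_nonneg _)]
  simp_rw [← Real.norm_eq_abs, ofReal_norm]

lemma lnorm_gauss {y : ℝ} (hy : 0 < y) : ∫⁻ x, ‖sm μ (gaussD d y) x‖ₑ ≤ 1 := by
  have hm := cont_gaussD d y
  calc _ ≤ ∫⁻ x, ∫⁻ z, ‖gaussD d y (x - z)‖ₑ ∂μ := by
        apply lintegral_mono; intro x
        exact enorm_integral_le_lintegral_enorm _
    _ = ∫⁻ z, (∫⁻ x, ‖gaussD d y (x - z)‖ₑ) ∂μ := by
        apply lintegral_lintegral_swap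
        apply Measurable.aemeasurable
        simp only [Function.uncurry_def]
        have := hm.measurable
        fun_prop
    _ = ∫⁻ z, 1 ∂μ := by
        congr 1; ext z
        rw [lintegral_sub_right_eq_self (fun x => ‖gaussD d y x‖ₑ),
          ← ofReal_integral_norm_eq_lintegral_enorm (int_gaussD d hy)]
        have : ∀ x, ‖gaussD d y x‖ = gaussD d y x := fun x => Real.norm_of_nonneg (gaussD_nonneg d hy x)
        simp_rw [this]
        rw [integral_gaussD d hy, ENNReal.ofReal_one]
    _ ≤ 1 := by simp

/-- the differential inequality, integrated -/
lemma key_ineq {s S : ℝ} (hs : 0 < s) (hsS : s ≤ S) :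
    ∫⁻ x, ‖sm (μ ∗ ν) (g1 d s) x‖ₑ ≤ (∫⁻ x, ‖sm μ (g1 d (S/2)) x‖ₑ) +
      ∫⁻ y in Set.Ioc s S, (∫⁻ x, ‖sm μ (g1 d (y/2)) x‖ₑ) * ∫⁻ x, ‖sm ν (g1 d (y/2)) x‖ₑ := by
  have hS : 0 < S := by linarith
  have hrep : ∀ x, sm (μ ∗ ν) (g1 d s) x = sm (μ ∗ ν) (g1 d S) x -
      ∫ y in Set.Ioc s S, sm (μ ∗ ν) (g2 d y) x := by
    intro x
    have ftc : ∀ v, ∫ y in Set.Ioc s S, g2 d y v = g1 d S v - g1 d s v := by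
      intro v
      rw [← intervalIntegral.integral_of_le hsS]
      apply intervalIntegral.integral_eq_sub_of_hasDerivAt
      · intro y hy
        rw [Set.uIcc_of_le hsS] at hy
        exact hasDerivAt_g1 d (by linarith [hy.1]) v
      · rw [intervalIntegrable_iff_integrableOn_Ioc_of_le hsS]
        refine Integrable.of_bound (C := (2 * π * s) ^ (-(d : ℝ) / 2) * ((4 + 2 * d + d ^ 2) / s ^ 2)) ?_ ?_
        · have := meas_g2 d
          have h : Measurable (fun y => g2 d y v) := this.comp (measurable_id.prodMk measurable_const)
          exact h.aestronglyMeasurable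
        · filter_upwards [ae_restrict_mem measurableSet_Ioc] with y hy
          exact g2_le d hs hy.1.le v
    have i1 : ∀ y, 0 < y → Integrable (fun z => g1 d y (x - z)) (μ ∗ ν) := by
      intro y hy
      refine Integrable.of_bound (C := (2 * π * y) ^ (-(d : ℝ) / 2) * ((2 + d) / y)) ?_
        (Filter.Eventually.of_forall fun z => g1_le d hy le_rfl _)
      have := cont_g1 d y
      exact Continuous.aestronglyMeasurable (by fun_prop)
    unfold sm
    rw [integral_integral_swap]
    · simp_rw [ftc]
      rw [integral_sub (i1 S hS) (i1 s hs)]; ring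
    · refine Integrable.of_bound (C := (2 * π * s) ^ (-(d : ℝ) / 2) * ((4 + 2 * d + d ^ 2) / s ^ 2)) ?_ ?_
      · have h : Measurable (fun p : ℝ × EuclideanSpace ℝ (Fin d) => g2 d p.1 (x - p.2)) :=
          (meas_g2 d).comp (measurable_fst.prodMk (measurable_const.sub measurable_snd))
        exact h.aestronglyMeasurable
      · have : ∀ᵐ p ∂((volume.restrict (Set.Ioc s S)).prod (μ ∗ ν)), p.1 ∈ Set.Ioc s S :=
          Measure.quasiMeasurePreserving_fst.ae (ae_restrict_mem measurableSet_Ioc)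
        filter_upwards [this] with p hp
        exact g2_le d hs hp.1.le _
  have hmg2 : Measurable (fun p : ℝ × EuclideanSpace ℝ (Fin d) => sm (μ ∗ ν) (g2 d p.1) p.2) := by
    have h : Measurable (fun p : (ℝ × EuclideanSpace ℝ (Fin d)) × EuclideanSpace ℝ (Fin d) =>
        g2 d p.1.1 (p.1.2 - p.2)) := (meas_g2 d).comp
        (by fun_prop : Measurable fun p : (ℝ × EuclideanSpace ℝ (Fin d)) × EuclideanSpace ℝ (Fin d) =>
          (p.1.1, p.1.2 - p.2))
    exact h.stronglyMeasurable.integral_prod_right.measurable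
  calc _ ≤ ∫⁻ x, (‖sm (μ ∗ ν) (g1 d S) x‖ₑ + ∫⁻ y in Set.Ioc s S, ‖sm (μ ∗ ν) (g2 d y) x‖ₑ) := by
        apply lintegral_mono; intro x
        simp only
        rw [hrep]
        refine (enorm_sub_le).trans ?_
        gcongr
        exact enorm_integral_le_lintegral_enorm _
    _ = (∫⁻ x, ‖sm (μ ∗ ν) (g1 d S) x‖ₑ) + ∫⁻ x, ∫⁻ y in Set.Ioc s S, ‖sm (μ ∗ ν) (g2 d y) x‖ₑ := by
        apply lintegral_add_left
        exact (sm_meas (μ ∗ ν) (cont_g1 d S)).measurable.enorm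
    _ = (∫⁻ x, ‖sm (μ ∗ ν) (g1 d S) x‖ₑ) + ∫⁻ y in Set.Ioc s S, ∫⁻ x, ‖sm (μ ∗ ν) (g2 d y) x‖ₑ := by
        congr 1
        apply lintegral_lintegral_swap
        exact (hmg2.comp measurable_swap).enorm.aemeasurable
    _ ≤ _ := by
        gcongr ?_ + ?_
        · refine (sm_conv_norm μ ν (cont_g1 d (S/2)) (g1_le d (half_pos hS) le_rfl)
            (cont_gaussD d (S/2)) (int_gaussD d (half_pos hS)) (cont_g1 d S)
            (g1_le d hS le_rfl) ?_).trans ?_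
          · intro x
            rw [conv_g1_gaussD d (half_pos hS) (half_pos hS), add_halves]
          · exact (mul_le_mul_right (lnorm_gauss ν (half_pos hS)) _).trans (mul_one _).le
        · refine setLIntegral_mono' measurableSet_Ioc fun y hy => ?_
          have hy : 0 < y := by linarith [hy.1]
          refine sm_conv_norm μ ν (cont_g1 d (y/2)) (g1_le d (half_pos hy) le_rfl)
            (cont_g1 d (y/2)) (int_g1 d (half_pos hy)) (cont_g2 d y)
            (g2_le d hy le_rfl) ?_
          intro x
          rw [conv_g1_g1 d (half_pos hy) (half_pos hy), add_halves]

end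

noncomputable def cst (d : ℕ) : ℝ :=
  Real.Gamma ((d : ℝ) / 2) / 2 * ((d : ℝ) / (2 * Real.exp 1)) ^ (-(d : ℝ) / 2)

lemma cst_pos {d : ℕ} (hd : 0 < d) : 0 < cst d := by
  unfold cst
  have h : (0:ℝ) < d := by exact_mod_cast hd
  have := Real.Gamma_pos_of_pos (half_pos h)
  positivity

lemma CKd_eq {d : ℕ} (hd : 0 < d) (K : ℝ) : CKd K d = 4 / cst d * (1 + 1 / (2 * K^2)) := by
  unfold CKd cst
  have h : (0:ℝ) < d := by exact_mod_cast hd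
  have h1 := Real.Gamma_pos_of_pos (half_pos h)
  rw [neg_div, Real.rpow_neg (by positivity)]
  congr 1
  have : 0 < ((d:ℝ) / (2 * Real.exp 1)) ^ ((d:ℝ) / 2) := by positivity
  field_simp
  norm_num

lemma gamma_bd (d : ℕ) (hd : 0 < d) :
    Real.Gamma ((d : ℝ) / 2) ≤ 5 * Real.exp ((d:ℝ)/2 * (Real.log ((d:ℝ)/2) - 1)) := by
  induction d using Nat.strong_induction_on with
  | _ d ih =>
  have step : ∀ x : ℝ, 0 < x → Real.Gamma x ≤ 5 * Real.exp (x * (Real.log x - 1)) →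
      Real.Gamma (x+1) ≤ 5 * Real.exp ((x+1) * (Real.log (x+1) - 1)) := by
    intro x hx h
    rw [Real.Gamma_add_one hx.ne']
    have h1 : Real.log (x / (x+1)) ≤ x/(x+1) - 1 := Real.log_le_sub_one_of_pos (by positivity)
    rw [Real.log_div (by positivity) (by positivity)] at h1
    have h2 : (x+1) * (Real.log x - Real.log (x+1)) ≤ -1 := by
      calc _ ≤ (x+1) * (x/(x+1) - 1) := by gcongr
        _ = -1 := by field_simp; ring
    calc x * Real.Gamma x ≤ x * (5 * Real.exp (x * (Real.log x - 1))) := by gcongr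
      _ = 5 * Real.exp (Real.log x + x * (Real.log x - 1)) := by
          rw [Real.exp_add, Real.exp_log hx]; ring
      _ ≤ _ := by
          gcongr
          nlinarith
  match d, ih with
  | 0, _ => omega
  | 1, _ =>
    simp only [Nat.cast_one]
    rw [Real.Gamma_one_half_eq]
    apply Real.sqrt_le_iff.2 ⟨by positivity, ?_⟩
    rw [mul_pow, ← Real.exp_nat_mul]
    have e : ((2:ℕ):ℝ) * (1/2 * (Real.log (1/2) - 1)) = Real.log (1/2) - 1 := by push_cast; ring
    rw [e, Real.exp_sub, Real.exp_log (by norm_num)]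
    have h1 := Real.exp_one_lt_d9
    have h2 := Real.pi_lt_d2
    have h3 := Real.exp_pos 1
    have h5 : (2 * Real.exp 1) * π ≤ 25 := by nlinarith [Real.pi_pos]
    rw [show (5:ℝ)^2 * (1/2 / Real.exp 1) = 25 / (2 * Real.exp 1) by field_simp; norm_num,
      le_div_iff₀ (by positivity)]
    linarith
  | 2, _ =>
    norm_num
    rw [Real.exp_neg]
    have h1 := Real.exp_one_lt_d9
    have h3 := Real.exp_pos 1
    rw [← div_eq_mul_inv, le_div_iff₀ h3]; linarith
  | k+3, ih =>
    have := step (((k+1:ℕ):ℝ)/2) (by positivity) (ih (k+1) (by omega) (by omega))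
    have e : ((k+3:ℕ):ℝ)/2 = ((k+1:ℕ):ℝ)/2 + 1 := by push_cast; ring
    rw [e]; exact this

lemma cst_le {d : ℕ} (hd : 0 < d) : cst d ≤ 5/2 := by
  have h : (0:ℝ) < d := by exact_mod_cast hd
  have h1 := gamma_bd d hd
  unfold cst
  have e : ((d : ℝ) / (2 * Real.exp 1)) ^ (-(d : ℝ) / 2)
      = (Real.exp ((d:ℝ)/2 * (Real.log ((d:ℝ)/2) - 1)))⁻¹ := by
    rw [Real.rpow_def_of_pos (by positivity), ← Real.exp_neg]
    congr 1
    rw [← div_div, Real.log_div (by positivity) (by positivity), Real.log_exp]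
    ring
  rw [e]
  have h2 := Real.exp_pos ((d:ℝ)/2 * (Real.log ((d:ℝ)/2) - 1))
  rw [← div_eq_mul_inv, div_le_iff₀ h2]
  linarith

lemma detail_eq {d : ℕ} (μ : Measure (EuclideanSpace ℝ (Fin d))) {t : ℝ} (ht : 0 < t) :
    detail d μ t = t^2 * cst d * ∫ x, |sm μ (g1 d (t^2)) x| := by
  unfold detail cst sm
  simp_rw [gaussDy_eq d (pow_pos ht 2)]
  ring

lemma lnorm_detail {d : ℕ} (hd : 0 < d) (μ : Measure (EuclideanSpace ℝ (Fin d))) [IsProbabilityMeasure μ]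
    {t : ℝ} (ht : 0 < t) :
    ∫⁻ x, ‖sm μ (g1 d (t^2)) x‖ₑ = ENNReal.ofReal (detail d μ t / (t^2 * cst d)) := by
  have hc := cst_pos hd
  rw [lnorm_eq μ (cont_g1 d _) (int_g1 d (pow_pos ht 2)), detail_eq μ ht]
  congr 1
  field_simp

lemma two_lemma {d : ℕ} (hd : 0 < d) (μ ν : Measure (EuclideanSpace ℝ (Fin d))) [IsProbabilityMeasure μ]
    [IsProbabilityMeasure ν] {α β r T : ℝ} (hα : 0 < α) (hβ : 0 < β) (hr : 0 < r) (hT : 1 ≤ T)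
    (h : ∀ t ∈ Set.Icc ((√2)⁻¹ * r) (T * r), detail d μ t ≤ α ∧ detail d ν t ≤ β) :
    detail d (μ ∗ ν) r ≤ 4 / cst d * α * β + α / T^2 := by
  have hc := cst_pos hd
  have hs2 : (√2)^2 = (2:ℝ) := Real.sq_sqrt (by norm_num)
  have hs2p : 0 < √2 := by positivity
  have hs2l : (√2)⁻¹ ≤ 1 := inv_le_one_of_one_le₀ (by nlinarith)
  have hsS : r^2 ≤ 2 * T^2 * r^2 := le_mul_of_one_le_left (by positivity) (by nlinarith)
  have key := key_ineq μ ν (pow_pos hr 2) hsS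
  rw [lnorm_detail hd _ hr] at key
  have b1 : ∫⁻ x, ‖sm μ (g1 d (2 * T^2 * r^2 / 2)) x‖ₑ ≤ ENNReal.ofReal (α / ((T * r)^2 * cst d)) := by
    rw [show 2 * T^2 * r^2 / 2 = (T * r)^2 by ring, lnorm_detail hd _ (by positivity)]
    apply ENNReal.ofReal_le_ofReal
    gcongr
    exact (h _ ⟨by nlinarith, le_rfl⟩).1
  have b2 : ∫⁻ y in Set.Ioc (r^2) (2 * T^2 * r^2), (∫⁻ x, ‖sm μ (g1 d (y/2)) x‖ₑ) *
      ∫⁻ x, ‖sm ν (g1 d (y/2)) x‖ₑ ≤ ENNReal.ofReal (4 * α * β / (cst d ^ 2 * r^2)) := by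
    calc _ ≤ ∫⁻ y in Set.Ioc (r^2) (2 * T^2 * r^2), ENNReal.ofReal (4 * α * β / cst d ^2 * (y^2)⁻¹) := by
          refine setLIntegral_mono' measurableSet_Ioc fun y hy => ?_
          have hy0 : 0 < y := lt_trans (by positivity) hy.1
          set t := √(y/2) with ht
          have ht0 : 0 < t := by positivity
          have ht2 : t^2 = y/2 := Real.sq_sqrt (by positivity)
          have hmem : t ∈ Set.Icc ((√2)⁻¹ * r) (T * r) := by
            constructor
            · apply Real.le_sqrt_of_sq_le
              rw [mul_pow, inv_pow, hs2]; linarith [hy.1]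
            · apply Real.sqrt_le_iff.2 ⟨by positivity, ?_⟩
              rw [mul_pow]; linarith [hy.2]
          rw [← ht2, lnorm_detail hd _ ht0, lnorm_detail hd _ ht0]
          calc _ ≤ ENNReal.ofReal (α / (t^2 * cst d)) * ENNReal.ofReal (β / (t^2 * cst d)) := by
                gcongr
                · exact (h t hmem).1
                · exact (h t hmem).2
            _ = _ := by
                rw [← ENNReal.ofReal_mul (by positivity), ht2]
                congr 1; field_simp; norm_num
      _ = ENNReal.ofReal (∫ y in Set.Ioc (r^2) (2 * T^2 * r^2), 4 * α * β / cst d ^2 * (y^2)⁻¹) := by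
          rw [ofReal_integral_eq_lintegral_ofReal]
          · refine Integrable.of_bound (C := 4 * α * β / cst d ^2 * ((r^2)^2)⁻¹) ?_ ?_
            · exact Measurable.aestronglyMeasurable (by fun_prop)
            · filter_upwards [ae_restrict_mem measurableSet_Ioc] with y hy
              have hy0 : 0 < y := lt_trans (by positivity) hy.1
              rw [Real.norm_of_nonneg (by positivity)]
              have := hy.1.le
              gcongr
          · exact Filter.Eventually.of_forall fun y => by positivity
      _ ≤ _ := by
          apply ENNReal.ofReal_le_ofReal
          rw [← intervalIntegral.integral_of_le hsS,
            intervalIntegral.integral_eq_sub_of_hasDerivAt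
              (f := fun y => - (4 * α * β / cst d ^2 * y⁻¹))]
          · have : 0 ≤ 4 * α * β / cst d ^2 * (2 * T^2 * r^2)⁻¹ := by positivity
            have e : 4 * α * β / (cst d ^ 2 * r^2) = 4 * α * β / cst d ^2 * (r^2)⁻¹ := by field_simp
            rw [e]; linarith
          · intro y hy
            rw [Set.uIcc_of_le hsS] at hy
            have hy0 : 0 < y := lt_of_lt_of_le (by positivity) hy.1
            convert! ((hasDerivAt_inv hy0.ne').const_mul (4 * α * β / cst d ^2)).neg using 1
            ring
          · apply ContinuousOn.intervalIntegrable
            rw [Set.uIcc_of_le hsS]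
            apply ContinuousOn.mul continuousOn_const
            apply ContinuousOn.inv₀ (by fun_prop)
            intro y hy
            have hy0 : 0 < y := lt_of_lt_of_le (by positivity) hy.1
            positivity
  have key2 := key.trans (add_le_add b1 b2)
  rw [← ENNReal.ofReal_add (by positivity) (by positivity),
    ENNReal.ofReal_le_ofReal_iff (by positivity), div_le_iff₀ (by positivity)] at key2
  refine key2.trans (le_of_eq ?_)
  field_simp
  ring

lemma convList_prob {d : ℕ} (l : List (Measure (EuclideanSpace ℝ (Fin d))))
    (hl : ∀ μ ∈ l, IsProbabilityMeasure μ) : IsProbabilityMeasure (convList l) := by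
  induction l with
  | nil => unfold convList; infer_instance
  | cons μ l ih =>
    unfold convList
    have := hl μ (by simp)
    have := ih fun ν hν => hl ν (by simp [hν])
    infer_instance

lemma convList_append {d : ℕ} (l l' : List (Measure (EuclideanSpace ℝ (Fin d))))
    (hl : ∀ μ ∈ l, IsProbabilityMeasure μ) (hl' : ∀ μ ∈ l', IsProbabilityMeasure μ) :
    convList (l ++ l') = convList l ∗ convList l' := by
  have := convList_prob l' hl'
  induction l with
  | nil => simp only [List.nil_append, convList]; rw [Measure.dirac_zero_conv]
  | cons μ l ih =>
    have := hl μ (by simp)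
    have hl2 : ∀ ν ∈ l, IsProbabilityMeasure ν := fun ν hν => hl ν (by simp [hν])
    have := convList_prob l hl2
    simp only [List.cons_append, convList]
    rw [ih hl2, Measure.conv_assoc]

section
variable {ι : Type*} (α : ι → ℝ) {a C : ℝ}

lemma prod_low (ha : 0 < a) (h : ∀ i, a ≤ α i) (l : List ι) : a ^ l.length ≤ (l.map α).prod := by
  induction l with
  | nil => simp
  | cons i l ih =>
    simp only [List.length_cons, List.map_cons, List.prod_cons, pow_succ']
    have := h i
    have : 0 ≤ α i := by linarith
    gcongr

lemma prod_up (hC : 0 < C) (h0 : ∀ i, 0 < α i) (h : ∀ i, α i * C ≤ 1) (l : List ι) :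
    0 < (l.map α).prod ∧ C ^ l.length * (l.map α).prod ≤ 1 := by
  induction l with
  | nil => simp
  | cons i l ih =>
    simp only [List.length_cons, List.map_cons, List.prod_cons, pow_succ']
    refine ⟨mul_pos (h0 i) ih.1, ?_⟩
    calc _ = (α i * C) * (C ^ l.length * (l.map α).prod) := by ring
      _ ≤ 1 * 1 := by
        have := ih.1
        gcongr
        · exact h i
        · exact ih.2
      _ = 1 := one_mul 1
end

lemma main_ind {d : ℕ} (hd : 0 < d) {ι : Type*} (μ : ι → Measure (EuclideanSpace ℝ (Fin d)))
    (hprob : ∀ i, IsProbabilityMeasure (μ i)) (α : ι → ℝ) {a K : ℝ} (hK : 1 < K) (ha : 0 < a)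
    (ha1 : a ≤ 1)
    (hα : ∀ i, a ≤ α i) (hαC : ∀ i, α i * CKd K d ≤ 1) (ℓ : ℕ) :
    ∀ (l : List ι) (r : ℝ), 0 < r → l ≠ [] → l.length ≤ 2^ℓ →
    (∀ t ∈ Set.Icc ((√2)⁻¹ ^ ℓ * r) (K^ℓ * (a⁻¹) ^ (ℓ * 2^ℓ) * r), ∀ i, detail d (μ i) t ≤ α i) →
    detail d (convList (l.map μ)) r ≤ CKd K d ^ (l.length - 1) * (l.map α).prod := by
  have hc := cst_pos hd
  have hc2 := cst_le hd
  have hCeq := CKd_eq hd K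
  set C := CKd K d with hCdef
  have hC4 : 4 / cst d ≤ C := by
    rw [hCeq]; apply le_mul_of_one_le_right (by positivity)
    have : 0 ≤ 1 / (2 * K^2) := by positivity
    linarith
  have hC85 : 8/5 ≤ C := le_trans (by rw [le_div_iff₀ hc]; linarith) hC4
  have hC0 : 0 < C := by linarith
  have hai : 1 ≤ a⁻¹ := (one_le_inv₀ ha).2 ha1
  have hs2l : (√2)⁻¹ ≤ 1 := inv_le_one_of_one_le₀ (Real.one_le_sqrt.2 (by norm_num))
  have hs2p : 0 < (√2)⁻¹ := by positivity
  induction ℓ with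
  | zero =>
    intro l r hr hl hlen h
    match l with
    | [] => simp at hl
    | [i] =>
      have := h r (by simp) i
      have := hprob i
      simp only [List.map_cons, List.map_nil, convList]
      rw [Measure.conv_dirac_zero]
      simpa
    | _ :: _ :: _ => simp at hlen
  | succ ℓ ih =>
    intro l r hr hl hlen h
    -- monotonicity of the ranges
    have hrange : ∀ u, (√2)⁻¹ * r ≤ u → u ≤ K * (a⁻¹) ^ (2^ℓ) * r →
        ∀ t ∈ Set.Icc ((√2)⁻¹ ^ ℓ * u) (K^ℓ * (a⁻¹) ^ (ℓ * 2^ℓ) * u), ∀ i, detail d (μ i) t ≤ α i := by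
      intro u hu1 hu2 t ht
      apply h
      constructor
      · refine le_trans ?_ ht.1
        rw [pow_succ, mul_assoc]; gcongr
      · refine ht.2.trans ?_
        calc _ ≤ K^ℓ * (a⁻¹) ^ (ℓ * 2^ℓ) * (K * (a⁻¹) ^ (2^ℓ) * r) := by gcongr
          _ = K^(ℓ+1) * (a⁻¹) ^ (ℓ * 2^ℓ + 2^ℓ) * r := by ring
          _ ≤ _ := by
            gcongr
            rw [← Nat.succ_mul]
            exact Nat.mul_le_mul_left _ (Nat.pow_le_pow_right (by norm_num) (Nat.le_succ ℓ))
    have hT1 : 1 ≤ K * (a⁻¹) ^ (2^ℓ) := one_le_mul_of_one_le_of_one_le hK.le (one_le_pow₀ hai)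
    by_cases hle : l.length ≤ 2^ℓ
    · exact ih l r hr hl hle (hrange r (by nlinarith) (by nlinarith))
    push Not at hle
    have hP := prod_up α hC0 (fun i => ha.trans_le (hα i)) hαC
    have hβpos : ∀ l : List ι, 0 < C ^ (l.length - 1) * (l.map α).prod := fun l => by
      have := (hP l).1
      positivity
    set l1 := l.take (2^ℓ) with hl1
    set l2 := l.drop (2^ℓ) with hl2
    have hl12 : l = l1 ++ l2 := (List.take_append_drop _ _).symm
    have hp : 0 < 2^ℓ := by positivity
    have len1 : l1.length = 2^ℓ := by rw [hl1, List.length_take]; omega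
    have len2 : l2.length = l.length - 2^ℓ := by rw [hl2, List.length_drop]
    rw [pow_succ] at hlen
    have ne1 : l1 ≠ [] := by rw [← List.length_pos_iff]; omega
    have ne2 : l2 ≠ [] := by rw [← List.length_pos_iff]; omega
    have pr : ∀ l : List ι, ∀ m ∈ l.map μ, IsProbabilityMeasure m := by
      intro l m hm
      obtain ⟨i, -, rfl⟩ := List.mem_map.1 hm
      exact hprob i
    have := convList_prob _ (pr l1)
    have := convList_prob _ (pr l2)
    have two := two_lemma hd (convList (l1.map μ)) (convList (l2.map μ)) (hβpos l1) (hβpos l2) hr hT1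
      (fun t ht => by
        have ht0 : 0 < t := lt_of_lt_of_le (by positivity) ht.1
        have hh := hrange t ht.1 ht.2
        exact ⟨ih l1 t ht0 ne1 (by omega) hh, ih l2 t ht0 ne2 (by omega) hh⟩)
    have hβlow : a ^ (2^ℓ) ≤ C ^ (l2.length - 1) * (l2.map α).prod := by
      calc a ^ (2^ℓ) ≤ a ^ l2.length := pow_le_pow_of_le_one ha.le ha1 (by omega)
        _ ≤ (l2.map α).prod := prod_low α ha hα l2
        _ ≤ _ := le_mul_of_one_le_left (hP l2).1.le (one_le_pow₀ (by linarith))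
    have hβup : C * (C ^ (l2.length - 1) * (l2.map α).prod) ≤ 1 := by
      refine le_trans (le_of_eq ?_) (hP l2).2
      rw [← mul_assoc, ← pow_succ']
      congr 2; omega
    have hprod : C ^ (l.length - 1) * (l.map α).prod =
        C * (C ^ (l1.length - 1) * (l1.map α).prod) * (C ^ (l2.length - 1) * (l2.map α).prod) := by
      have e : l.length - 1 = (l1.length - 1) + (l2.length - 1) + 1 := by omega
      rw [e, pow_succ, pow_add]
      nth_rw 1 [hl12]
      rw [List.map_append, List.prod_append]; ring
    rw [hprod]
    nth_rw 1 [hl12]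
    rw [List.map_append, convList_append _ _ (pr l1) (pr l2)]
    refine two.trans ?_
    have hb1 := hβpos l1
    have hb2 := hβpos l2
    set β1 := C ^ (l1.length - 1) * (l1.map α).prod
    set β2 := C ^ (l2.length - 1) * (l2.map α).prod
    have hw : 0 < a ^ (2^ℓ) := by positivity
    have e1 : β1 / (K * a⁻¹ ^ 2 ^ ℓ)^2 = β1 * (a^(2^ℓ))^2 / K^2 := by
      rw [inv_pow]; field_simp
    have h1 : (a^(2^ℓ))^2 ≤ 2 / cst d * β2 := by
      calc (a^(2^ℓ))^2 ≤ β2^2 := by gcongr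
        _ = β2 * β2 := sq β2
        _ ≤ 2 / cst d * β2 := by
          gcongr
          have : β2 ≤ 5/8 := by nlinarith
          refine this.trans ?_
          rw [le_div_iff₀ hc]; linarith
    rw [e1, hCeq]
    calc _ ≤ 4 / cst d * β1 * β2 + β1 * (2 / cst d * β2) / K^2 := by gcongr
      _ = _ := by field_simp; ring

theorem statement2 {d : ℕ} (n : ℕ) (hn : 0 < n) (K : ℝ) (hK : 1 < K)
    (μ : Fin n → Measure (EuclideanSpace ℝ (Fin d)))
    (hprob : ∀ i, IsProbabilityMeasure (μ i))
    (α : Fin n → ℝ) (hmono : Monotone α)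
    (hpos : 0 < α ⟨0, hn⟩) (hlt : α ⟨n - 1, by omega⟩ < (CKd K d)⁻¹)
    (m r : ℝ) (hm : m = Real.log n / Real.log (3 / 2)) (hr : 0 < r)
    (h : ∀ t ∈ Set.Icc ((2 : ℝ) ^ (-m / 2) * r)
        (K ^ m * (α ⟨0, hn⟩) ^ (-(m * 2 ^ m)) * r),
      ∀ i, detail d (μ i) t ≤ α i) :
    detail d (convList (List.ofFn μ)) r ≤ CKd K d ^ (n - 1) * ∏ i, α i := by
  have hlow : ∀ i, α ⟨0, hn⟩ ≤ α i := fun i => hmono (by simp [Fin.le_def])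
  have hup : ∀ i, α i < (CKd K d)⁻¹ := fun i =>
    (hmono (by simp [Fin.le_def]; omega)).trans_lt hlt
  have hd : 0 < d := by
    rcases Nat.eq_zero_or_pos d with rfl | hd
    · have := hpos.trans (hup _)
      simp [CKd, Real.Gamma_zero] at this
    · exact hd
  have hc := cst_pos hd
  have hc2 := cst_le hd
  have hCeq := CKd_eq hd K
  have hC1 : 1 ≤ CKd K d := by
    have h1 : 1 ≤ 4 / cst d := by rw [le_div_iff₀ hc]; linarith
    have h2 : 1 ≤ 1 + 1 / (2 * K^2) := by
      have : 0 ≤ 1 / (2 * K^2) := by positivity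
      linarith
    rw [hCeq]; exact one_le_mul_of_one_le_of_one_le h1 h2
  have hC0 : 0 < CKd K d := by linarith
  set a := α ⟨0, hn⟩ with hadef
  have ha1 : a ≤ 1 := (hup _).le.trans (inv_le_one_of_one_le₀ hC1)
  have hαC : ∀ i, α i * CKd K d ≤ 1 := fun i => by
    have := (hup i).le
    rwa [← one_div, le_div_iff₀ hC0] at this
  have hpow : (3/2 : ℝ) ^ (Nat.clog 2 n) ≤ n := by
    rcases Nat.eq_zero_or_pos (Nat.clog 2 n) with h0 | h0
    · rw [h0, pow_zero]; exact_mod_cast hn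
    · obtain ⟨k, hk⟩ : ∃ k, Nat.clog 2 n = k + 1 := ⟨_, (Nat.succ_pred_eq_of_pos h0).symm⟩
      have hn1 : 1 < n := by
        by_contra hcon
        have : n = 1 := by omega
        subst this
        simp at h0
      have h1 := Nat.pow_pred_clog_lt_self (b := 2) (by norm_num) hn1
      rw [hk] at h1 ⊢
      simp only [Nat.pred_succ] at h1
      have h2 : ∀ k : ℕ, (3/2 : ℝ)^(k+1) ≤ 2^k + 1 := by
        intro k
        induction k with
        | zero => norm_num
        | succ k ih =>
          rw [pow_succ, pow_succ (2:ℝ)]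
          have : (1:ℝ) ≤ 2^k := one_le_pow₀ (by norm_num)
          linarith
      refine (h2 k).trans ?_
      exact_mod_cast h1
  set ℓ := Nat.clog 2 n with hℓ
  have hℓm : (ℓ:ℝ) ≤ m := by
    have hlog : 0 < Real.log (3/2) := Real.log_pos (by norm_num)
    rw [hm, le_div_iff₀ hlog, ← Real.log_pow]
    exact Real.log_le_log (by positivity) hpow
  have hm0 : 0 ≤ m := le_trans (by positivity) hℓm
  have H := main_ind hd μ hprob α hK hpos ha1 hlow hαC ℓ (List.finRange n) r hr
    (by rw [← List.length_pos_iff]; simpa using hn)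
    (by simpa using Nat.le_pow_clog (by norm_num) n) ?_
  · have e1 : List.ofFn μ = (List.finRange n).map μ := List.ofFn_eq_map
    have e2 : ∏ i, α i = ((List.finRange n).map α).prod := by
      rw [← List.ofFn_eq_map, List.prod_ofFn]
    rw [e1, e2]
    simpa using H
  · intro t ht
    apply h
    constructor
    · refine le_trans ?_ ht.1
      gcongr
      have : (√2)⁻¹ ^ ℓ = (2:ℝ) ^ (-(ℓ:ℝ) / 2) := by
        rw [Real.sqrt_eq_rpow, ← Real.rpow_neg (by norm_num), ← Real.rpow_natCast,
          ← Real.rpow_mul (by norm_num)]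
        congr 1; ring
      rw [this]
      apply Real.rpow_le_rpow_of_exponent_le (by norm_num)
      linarith
    · refine ht.2.trans ?_
      have k1 : K^ℓ ≤ K^m := by
        rw [← Real.rpow_natCast]
        exact Real.rpow_le_rpow_of_exponent_le hK.le hℓm
      have k2 : a⁻¹ ^ (ℓ * 2^ℓ) ≤ a ^ (-(m * 2^m)) := by
        rw [Real.rpow_neg hpos.le, ← Real.inv_rpow hpos.le, ← Real.rpow_natCast]
        apply Real.rpow_le_rpow_of_exponent_le ((one_le_inv₀ hpos).2 ha1)
        push_cast
        have : (2:ℝ)^ℓ ≤ 2^m := by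
          rw [← Real.rpow_natCast]
          exact Real.rpow_le_rpow_of_exponent_le (by norm_num) hℓm
        gcongr
      have : 0 ≤ K^m := by positivity
      gcongr
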